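/- For all integers k ≥ 1 and ℓ ≥ 1, the sum Σ 1/(n₁ n₂ ⋯ n_k), taken over all k-tuples of positive integers (n₁, …, n_k) with n₁ + n₂ + ⋯ + n_k = ℓ, is at most (k²/ℓ)·(1 + log ℓ)^{k−1}. -/

import Mathlib

/-- The sum with one coordinate dropped is at most a power of the harmonic sum. -/
lemma sum_drop_le (m ℓ : ℕ) (i : Fin (m + 1)) :
    ∑ f ∈ (Finset.Nat.antidiagonalTuple (m + 1) ℓ).filter (fun f => ∀ i, 0 < f i),
        ∏ j, (1 / ((i.removeNth f : Fin m → ℕ) j : ℝ))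
      ≤ (∑ n ∈ Finset.Icc 1 ℓ, (1 / (n : ℝ))) ^ m := by
  have hpow : (∑ n ∈ Finset.Icc 1 ℓ, (1 / (n : ℝ))) ^ m
      = ∑ g ∈ Fintype.piFinset (fun _ : Fin m => Finset.Icc 1 ℓ), ∏ j, (1 / (g j : ℝ)) := by
    rw [← Finset.prod_univ_sum (fun _ : Fin m => Finset.Icc 1 ℓ) (fun _ n => (1 / (n : ℝ)))]
    simp
  have hinj : Set.InjOn (fun f : Fin (m + 1) → ℕ => (i.removeNth f : Fin m → ℕ))
      ((Finset.Nat.antidiagonalTuple (m + 1) ℓ).filter (fun f => ∀ i, 0 < f i) :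
        Finset (Fin (m + 1) → ℕ)) := by
    intro f hf g hg hfg
    simp only [Finset.coe_filter, Finset.Nat.mem_antidiagonalTuple, Set.mem_setOf_eq] at hf hg
    have h1 : ∀ j, f (i.succAbove j) = g (i.succAbove j) := fun j => congrFun hfg j
    have hf1 := hf.1
    have hg1 := hg.1
    rw [Fin.sum_univ_succAbove _ i] at hf1 hg1
    simp only [h1] at hf1
    funext x
    rcases Fin.eq_self_or_eq_succAbove i x with rfl | ⟨j, rfl⟩
    · omega
    · exact h1 j
  rw [hpow, ← Finset.sum_image (f := fun g : Fin m → ℕ => ∏ j, (1 / (g j : ℝ))) hinj]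
  apply Finset.sum_le_sum_of_subset_of_nonneg
  · intro g hg
    simp only [Finset.mem_image, Finset.mem_filter, Finset.Nat.mem_antidiagonalTuple] at hg
    obtain ⟨f, ⟨hs, hp⟩, rfl⟩ := hg
    rw [Fintype.mem_piFinset]
    intro j
    rw [Finset.mem_Icc]
    refine ⟨hp _, ?_⟩
    rw [← hs]
    exact Finset.single_le_sum (f := f) (fun _ _ => Nat.zero_le _) (Finset.mem_univ _)
  · intros
    positivity

/-- For all integers `k ≥ 1` and `ℓ ≥ 1`, the sum `Σ 1/(n₁ n₂ ⋯ n_k)` over all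
ordered `k`-tuples of positive integers `(n₁, …, n_k)` with `n₁ + ⋯ + n_k = ℓ` is at most
`(k²/ℓ)·(1 + log ℓ)^(k−1)`. -/
theorem sum_inv_prod_tuples_le (k ℓ : ℕ) (hk : 1 ≤ k) (hℓ : 1 ≤ ℓ) :
    ∑ f ∈ (Finset.Nat.antidiagonalTuple k ℓ).filter (fun f => ∀ i, 0 < f i),
        ∏ i, (1 / (f i : ℝ))
      ≤ ((k : ℝ) ^ 2 / (ℓ : ℝ)) * (1 + Real.log ℓ) ^ (k - 1) := by
  obtain ⟨m, rfl⟩ : ∃ m, k = m + 1 := ⟨k - 1, by omega⟩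
  have hl : (0 : ℝ) < ℓ := by exact_mod_cast hℓ
  have hlog : 0 ≤ Real.log ℓ := Real.log_natCast_nonneg ℓ
  have hH : ∑ n ∈ Finset.Icc 1 ℓ, (1 / (n : ℝ)) ≤ 1 + Real.log ℓ := by
    have h := harmonic_le_one_add_log ℓ
    rw [harmonic_eq_sum_Icc] at h
    push_cast at h
    simpa using h
  have hH0 : 0 ≤ ∑ n ∈ Finset.Icc 1 ℓ, (1 / (n : ℝ)) := by positivity
  have key : (ℓ : ℝ) * ∑ f ∈ (Finset.Nat.antidiagonalTuple (m + 1) ℓ).filter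
        (fun f => ∀ i, 0 < f i), ∏ i, (1 / (f i : ℝ))
      = ∑ i : Fin (m + 1), ∑ f ∈ (Finset.Nat.antidiagonalTuple (m + 1) ℓ).filter
        (fun f => ∀ i, 0 < f i), ∏ j, (1 / ((i.removeNth f : Fin m → ℕ) j : ℝ)) := by
    rw [Finset.sum_comm, Finset.mul_sum]
    refine Finset.sum_congr rfl fun f hf => ?_
    simp only [Finset.mem_filter, Finset.Nat.mem_antidiagonalTuple] at hf
    rw [← hf.1, Nat.cast_sum, Finset.sum_mul]
    refine Finset.sum_congr rfl fun i _ => ?_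
    have hi : (f i : ℝ) ≠ 0 := by exact_mod_cast (hf.2 i).ne'
    rw [Fin.prod_univ_succAbove _ i, ← mul_assoc, mul_one_div_cancel hi, one_mul]
    rfl
  have hle : (ℓ : ℝ) * ∑ f ∈ (Finset.Nat.antidiagonalTuple (m + 1) ℓ).filter
        (fun f => ∀ i, 0 < f i), ∏ i, (1 / (f i : ℝ))
      ≤ ((m + 1 : ℕ) : ℝ) * (1 + Real.log ℓ) ^ m := by
    rw [key]
    calc _ ≤ ∑ i : Fin (m + 1), (1 + Real.log ℓ) ^ m :=
          Finset.sum_le_sum fun i _ =>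
            (sum_drop_le m ℓ i).trans (pow_le_pow_left₀ hH0 hH m)
      _ = _ := by simp
  have hk1 : ((m + 1 : ℕ) : ℝ) ≤ ((m + 1 : ℕ) : ℝ) ^ 2 := by
    have : (1 : ℝ) ≤ ((m + 1 : ℕ) : ℝ) := by exact_mod_cast hk
    nlinarith
  have hP : 0 ≤ (1 + Real.log ℓ) ^ m := by positivity
  rw [Nat.add_sub_cancel, div_mul_eq_mul_div, le_div_iff₀ hl, mul_comm]
  exact hle.trans (mul_le_mul_of_nonneg_right hk1 hP)
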